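/- Every rule of the system P is truth-preserving: for every rule instance of P with premise A and conclusion B (including the equational rules induced by the congruence =_P) and every Boolean valuation v of the variables, if v(A) = true then v(B) = true; moreover, if A =_P B then v(A) = v(B) for every valuation v. Consequently, if there is a derivation in P from A to B and v(A) = true, then v(B) = true. -/

import Mathlib

/-!
The Subatomic system-1.1 `P`: formulas built from the constants `T`, `F`,
literals, and the binary operations `∧`, `π₀`, `π₁`, `∨`.
-/

/-- The four binary operations of `P`. -/
inductive POp : Type where
  | and | pi0 | pi1 | or
deriving DecidableEq

/-- Formulas of `P`. -/
inductive PF : Type where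
  | tt : PF
  | ff : PF
  | var : ℕ → PF
  | nvar : ℕ → PF
  | op : POp → PF → PF → PF
deriving DecidableEq

/-- Negation on operations: `∧` and `∨` are De Morgan duals, the projections
`π₀` and `π₁` are self-dual. -/
def POp.neg : POp → POp
  | .and => .or
  | .or => .and
  | .pi0 => .pi0
  | .pi1 => .pi1

/-- Negation of formulas of `P` (an involution). -/
def PF.neg : PF → PF
  | .tt => .ff
  | .ff => .tt
  | .var n => .nvar n
  | .nvar n => .var n
  | .op o A B => .op o.neg A.neg B.neg

/-- Boolean semantics of `P`: `π₀` and `π₁` are the projections. -/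
def PF.eval (v : ℕ → Bool) : PF → Bool
  | .tt => true
  | .ff => false
  | .var n => v n
  | .nvar n => ! v n
  | .op .and A B => A.eval v && B.eval v
  | .op .or A B => A.eval v || B.eval v
  | .op .pi0 A _B => A.eval v
  | .op .pi1 _A B => B.eval v

/-- The generating axioms of the congruence `=_P`. -/
inductive PAx : PF → PF → Prop where
  | assoc (o : POp) (A B C : PF) : PAx (.op o (.op o A B) C) (.op o A (.op o B C))
  | comm_and (A B : PF) : PAx (.op .and A B) (.op .and B A)
  | comm_or (A B : PF) : PAx (.op .or A B) (.op .or B A)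
  | or_ff (A : PF) : PAx (.op .or A .ff) A
  | pi0_ax (A B : PF) : PAx (.op .pi0 A B) A
  | pi1_ax (A B : PF) : PAx (.op .pi1 A B) B
  | and_ff (u : PF) (hu : u = .tt ∨ u = .ff) : PAx (.op .and u .ff) .ff
  | em_const (u : PF) (hu : u = .tt ∨ u = .ff) : PAx (.op .or u u.neg) .tt
  | em_var (n : ℕ) : PAx (.op .or (.var n) (.nvar n)) .tt
  | idem_const (u : PF) (hu : u = .tt ∨ u = .ff) : PAx (.op .or u u) u
  | idem_var (n : ℕ) : PAx (.op .or (.var n) (.var n)) (.var n)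

/-- The congruence `=_P`: the least congruence generated by the axioms. -/
inductive PEqv : PF → PF → Prop where
  | ax {A B} : PAx A B → PEqv A B
  | refl (A) : PEqv A A
  | symm {A B} : PEqv A B → PEqv B A
  | trans {A B C} : PEqv A B → PEqv B C → PEqv A C
  | congr {A A' B B'} (o : POp) : PEqv A A' → PEqv B B' →
      PEqv (.op o A B) (.op o A' B')

/-- One inference step of the system `P`, applicable at any depth inside a
formula: the rules `aiⱼ↓`, `aiⱼ↑`, `s↓`, `s↑`, `m↓`, `m↑`, `cⱼ↓`, `cⱼ↑`
(for `j ∈ {0,1}`) and the equational rules `E ⟶ F` and `F̄ ⟶ Ē` for each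
generating axiom `E = F` of `=_P`. -/
inductive PStep : PF → PF → Prop where
  | ai_down (j : POp) (hj : j = .pi0 ∨ j = .pi1) (A B C D : PF) :
      PStep (.op j (.op .or A B) (.op .or C D)) (.op .or (.op j A C) (.op j B D))
  | ai_up (j : POp) (hj : j = .pi0 ∨ j = .pi1) (A B C D : PF) :
      PStep (.op .and (.op j A C) (.op j B D)) (.op j (.op .and A B) (.op .and C D))
  | s_down (A B C D : PF) :
      PStep (.op .and (.op .or A B) (.op .or C D)) (.op .or (.op .and A C) (.op .or B D))
  | s_up (A B C D : PF) :
      PStep (.op .and (.op .or A C) (.op .and B D)) (.op .or (.op .and A B) (.op .and C D))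
  | m_down (A B C D : PF) :
      PStep (.op .or (.op .and A B) (.op .and C D)) (.op .and (.op .or A C) (.op .or B D))
  | m_up (A B C D : PF) :
      PStep (.op .or (.op .and A C) (.op .and B D)) (.op .and (.op .or A B) (.op .or C D))
  | c_down (j : POp) (hj : j = .pi0 ∨ j = .pi1) (A B C D : PF) :
      PStep (.op .or (.op j A B) (.op j C D)) (.op j (.op .or A C) (.op .or B D))
  | c_up (j : POp) (hj : j = .pi0 ∨ j = .pi1) (A B C D : PF) :
      PStep (.op j (.op .and A C) (.op .and B D)) (.op .and (.op j A B) (.op j C D))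
  | eq_down {E F : PF} (h : PAx E F) : PStep E F
  | eq_up {E F : PF} (h : PAx E F) : PStep F.neg E.neg
  | congL {A A'} (o : POp) (B : PF) (h : PStep A A') : PStep (.op o A B) (.op o A' B)
  | congR {B B'} (o : POp) (A : PF) (h : PStep B B') : PStep (.op o A B) (.op o A B')

/-- A derivation in `P` from `A` to `B`: a finite concatenation of rule
instances. -/
def PDeriv : PF → PF → Prop := Relation.ReflTransGen PStep

/-!
Truth preservation on `Bool` is the inequality `A.eval v ≤ B.eval v`, and this inequality makes
sense and holds in every Boolean algebra. All four operations are monotone, so it survives in any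
context, and it suffices to check each rule at the root. The projections commute with meets and
joins, which makes both sides of every `ai` and `c` rule equal; the switch rules hold by
distributivity and the medial rules in any lattice. The dual equational rules reduce to the axioms
because negation complements the value.
-/

section BooleanSemantics

variable {α : Type*}

/-- The interpretation of an operation of `P` in a lattice: `∧` and `∨` are meet and join, and `πᵢ`
selects the left argument for `i = 0` and the right one for `i = 1`. -/
def POp.interp [Lattice α] : POp → α → α → α
  | .and, a, b => a ⊓ b
  | .or, a, b => a ⊔ b
  | .pi0, a, _ => a
  | .pi1, _, b => b

namespace POp

theorem interp_mono [Lattice α] (o : POp) {a a' b b' : α} (ha : a ≤ a') (hb : b ≤ b') :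
    o.interp a b ≤ o.interp a' b' := by
  cases o
  case and => exact inf_le_inf ha hb
  case pi0 => exact ha
  case pi1 => exact hb
  case or => exact sup_le_sup ha hb

theorem interp_assoc [Lattice α] (o : POp) (a b c : α) :
    o.interp (o.interp a b) c = o.interp a (o.interp b c) := by
  cases o
  case and => exact inf_assoc a b c
  case pi0 | pi1 => rfl
  case or => exact sup_assoc a b c

theorem interp_neg_compl [BooleanAlgebra α] (o : POp) (a b : α) :
    o.neg.interp aᶜ bᶜ = (o.interp a b)ᶜ := by
  cases o
  case and => exact compl_inf.symm
  case pi0 | pi1 => rfl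
  case or => exact compl_sup.symm

theorem interp_sup_of_proj [Lattice α] {j : POp} (hj : j = .pi0 ∨ j = .pi1) (a b c d : α) :
    j.interp (a ⊔ b) (c ⊔ d) = j.interp a c ⊔ j.interp b d := by
  rcases hj with rfl | rfl <;> rfl

theorem interp_inf_of_proj [Lattice α] {j : POp} (hj : j = .pi0 ∨ j = .pi1) (a b c d : α) :
    j.interp (a ⊓ b) (c ⊓ d) = j.interp a c ⊓ j.interp b d := by
  rcases hj with rfl | rfl <;> rfl

end POp

theorem inf_sup_inf_le_sup_inf_sup [Lattice α] (a b c d : α) :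
    (a ⊓ b) ⊔ (c ⊓ d) ≤ (a ⊔ c) ⊓ (b ⊔ d) :=
  le_inf (sup_le_sup inf_le_left inf_le_left) (sup_le_sup inf_le_right inf_le_right)

theorem sup_inf_inf_le_inf_sup_inf [DistribLattice α] (a b c d : α) :
    (a ⊔ c) ⊓ (b ⊓ d) ≤ (a ⊓ b) ⊔ (c ⊓ d) :=
  calc
    (a ⊔ c) ⊓ (b ⊓ d) = (a ⊓ (b ⊓ d)) ⊔ (c ⊓ (b ⊓ d)) := inf_sup_right a c (b ⊓ d)
    _ ≤ (a ⊓ b) ⊔ (c ⊓ d) :=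
      sup_le_sup (inf_le_inf_left a inf_le_left) (inf_le_inf_left c inf_le_right)

theorem sup_inf_sup_le_inf_sup_sup [DistribLattice α] (a b c d : α) :
    (a ⊔ b) ⊓ (c ⊔ d) ≤ (a ⊓ c) ⊔ (b ⊔ d) :=
  sup_inf_inf_le_inf_sup_inf (α := αᵒᵈ) a b c d

variable [BooleanAlgebra α]

/-- The interpretation of a formula of `P` in a Boolean algebra under the assignment `v` of its
variables, generalizing the Boolean semantics `PF.eval`. -/
def PF.interp (v : ℕ → α) : PF → α
  | .tt => ⊤
  | .ff => ⊥
  | .var n => v n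
  | .nvar n => (v n)ᶜ
  | .op o A B => o.interp (A.interp v) (B.interp v)

namespace PF

theorem interp_eq_eval (v : ℕ → Bool) (A : PF) : A.interp v = A.eval v := by
  induction A with
  | tt | ff | var | nvar => rfl
  | op o A B ihA ihB => cases o <;> simp only [interp, eval, ihA, ihB] <;> rfl

theorem interp_neg (v : ℕ → α) (A : PF) : A.neg.interp v = (A.interp v)ᶜ := by
  induction A with
  | tt => exact compl_top.symm
  | ff => exact compl_bot.symm
  | var => rfl
  | nvar n => exact (compl_compl (v n)).symm
  | op o A B ihA ihB => simp only [neg, interp, ihA, ihB, POp.interp_neg_compl]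

end PF

theorem PAx.interp_eq {A B : PF} (h : PAx A B) (v : ℕ → α) : A.interp v = B.interp v := by
  cases h with
  | assoc o A B C => exact o.interp_assoc _ _ _
  | comm_and A B => exact inf_comm (A.interp v) (B.interp v)
  | comm_or A B => exact sup_comm (A.interp v) (B.interp v)
  | or_ff => exact sup_bot_eq _
  | pi0_ax | pi1_ax => rfl
  | and_ff => exact inf_bot_eq _
  | em_const u =>
    simp only [PF.interp, PF.interp_neg]
    exact sup_compl_eq_top
  | em_var => exact sup_compl_eq_top
  | idem_const | idem_var => exact sup_idem _

theorem PEqv.interp_eq {A B : PF} (h : PEqv A B) (v : ℕ → α) : A.interp v = B.interp v := by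
  induction h with
  | ax hAx => exact hAx.interp_eq v
  | refl => rfl
  | symm _ ih => exact ih.symm
  | trans _ _ ihAB ihBC => exact ihAB.trans ihBC
  | congr o _ _ ihA ihB => exact congrArg₂ o.interp ihA ihB

theorem PStep.interp_le {A B : PF} (h : PStep A B) (v : ℕ → α) : A.interp v ≤ B.interp v := by
  induction h with
  | ai_down j hj => exact (POp.interp_sup_of_proj hj _ _ _ _).le
  | ai_up j hj => exact (POp.interp_inf_of_proj hj _ _ _ _).ge
  | s_down => exact sup_inf_sup_le_inf_sup_sup _ _ _ _
  | s_up => exact sup_inf_inf_le_inf_sup_inf _ _ _ _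
  | m_down | m_up => exact inf_sup_inf_le_sup_inf_sup _ _ _ _
  | c_down j hj => exact (POp.interp_sup_of_proj hj _ _ _ _).ge
  | c_up j hj => exact (POp.interp_inf_of_proj hj _ _ _ _).le
  | eq_down hAx => exact (hAx.interp_eq v).le
  | eq_up hAx => rw [PF.interp_neg, PF.interp_neg, hAx.interp_eq v]
  | congL o B _ ih => exact o.interp_mono ih le_rfl
  | congR o A _ ih => exact o.interp_mono le_rfl ih

theorem PDeriv.interp_le {A B : PF} (h : PDeriv A B) (v : ℕ → α) : A.interp v ≤ B.interp v := by
  induction h with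
  | refl => rfl
  | tail _ hstep ih => exact ih.trans (hstep.interp_le v)

theorem P_rules_truth_preserving_general :
    (∀ A B : PF, PStep A B → ∀ v : ℕ → α, A.interp v ≤ B.interp v) ∧
    (∀ A B : PF, PEqv A B → ∀ v : ℕ → α, A.interp v = B.interp v) ∧
    (∀ A B : PF, PDeriv A B → ∀ v : ℕ → α, A.interp v ≤ B.interp v) :=
  ⟨fun _ _ h v => h.interp_le v, fun _ _ h v => h.interp_eq v, fun _ _ h v => h.interp_le v⟩

end BooleanSemantics

/-- **Soundness of the rules of `P`.**  Every rule instance of `P`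
(including the equational rules) is truth-preserving; moreover `=_P`
preserves the value under every valuation; consequently, derivations in `P`
are truth-preserving. -/
theorem P_rules_truth_preserving :
    (∀ A B : PF, PStep A B → ∀ v : ℕ → Bool, A.eval v = true → B.eval v = true) ∧
    (∀ A B : PF, PEqv A B → ∀ v : ℕ → Bool, A.eval v = B.eval v) ∧
    (∀ A B : PF, PDeriv A B → ∀ v : ℕ → Bool, A.eval v = true → B.eval v = true) := by
  simpa only [PF.interp_eq_eval, Bool.le_iff_imp] using
    P_rules_truth_preserving_general (α := Bool)
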